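/- arXiv:1307.0676 — 2 statements merged into one kernel-verified Lean document; each statement's English description precedes it below -/
import Mathlib

section
/- A Cohen–Macaulay Λ-module M is indecomposable if and only if M is isomorphic as a Λ-module to (i,j) for some pair 1 ≤ i < j ≤ n. -/
set_option synthInstance.maxHeartbeats 1000000
set_option maxHeartbeats 1000000

open Polynomial Matrix

noncomputable section

/-- The exponent `c_{ij}` (with 0-based indices `i j : Fin n`, corresponding to the 1-based
`c_{i+1,j+1} = δ_{i+1>j+1} + δ_{i+1>j+2} − δ_{(i+1,j+1)=(1,n)}`). -/
def cExp (n : ℕ) (i j : Fin n) : ℤ :=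
  (if (j : ℕ) < (i : ℕ) then 1 else 0) + (if (j : ℕ) + 1 < (i : ℕ) then 1 else 0)
    - (if (i : ℕ) = 0 ∧ (j : ℕ) = n - 1 then 1 else 0)

/-- The subset `x^c · K[x]` of `K(x)`. -/
def xPow (K : Type*) [Field K] (c : ℤ) : Set (RatFunc K) :=
  {f | ∃ p : Polynomial K, f = RatFunc.X ^ c * algebraMap (Polynomial K) (RatFunc K) p}

/-- The carrier set of the tiled order `Λ ⊆ M_n(K(x))`:
matrices whose `(i,j)` entry lies in `x^{c_{ij}}·K[x]`. -/
def lambdaCarrier (K : Type*) [Field K] (n : ℕ) : Set (Matrix (Fin n) (Fin n) (RatFunc K)) :=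
  {M | ∀ i j, M i j ∈ xPow K (cExp n i j)}

/-- Exponent pattern of the module `(i,j)` (1-based `i j`; `k : ℕ` is a 0-based coordinate,
so the 1-based coordinate is `k+1`): `0` for `k+1 ≤ i`, `1` for `i < k+1 ≤ j`, `2` otherwise. -/
def dExp (i j k : ℕ) : ℤ := if k + 1 ≤ i then 0 else if k + 1 ≤ j then 1 else 2

/-- The carrier set of the `Λ`-module `(i,j)` inside the column space `K(x)^n`. -/
def ijSet (K : Type*) [Field K] (n : ℕ) (i j : ℕ) : Set (Fin n → RatFunc K) :=
  {v | ∀ k : Fin n, v k ∈ xPow K (dExp i j (k : ℕ))}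

/-- Column vectors form a module over the matrix ring via `mulVec`. -/
instance matVecModule (K : Type*) [Field K] (n : ℕ) :
    Module (Matrix (Fin n) (Fin n) (RatFunc K)) (Fin n → RatFunc K) where
  smul M v := M.mulVec v
  one_smul v := Matrix.one_mulVec v
  mul_smul M N v := (Matrix.mulVec_mulVec v M N).symm
  smul_zero M := Matrix.mulVec_zero M
  smul_add M u v := Matrix.mulVec_add M u v
  add_smul M N v := Matrix.add_mulVec M N v
  zero_smul v := Matrix.zero_mulVec v

universe u

/-!
Write `Eᵢⱼ` for the matrix units, with indices starting at `0`. A Cohen–Macaulay module `M` is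
determined by the chain of lattices `E₀ₖ M` in its corner `L = E₀₀ M`, which decreases from `L` to
a sublattice of `x L`, loses at most a factor `x` at each step and contains `x² L`. Take the first
term of the chain contained in `x L`, and then a vector `b ∉ x L` in the term before it whose
multiple `x b` stays in the chain as long as possible. After correcting `b` modulo `x² L`, there is
a functional `f` with `f b = 1` that splits off the line spanned by `b` from every term of the
chain, and the two jumps met on the way are the indices of the module `(i, j)` carried by that line.
The projection `m ↦ f m • b` extends to an idempotent endomorphism of `M`, which is the identity if
`M` is indecomposable. Conversely, any two nonzero submodules of `K(x)ⁿ` intersect nontrivially,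
since `K(x)ⁿ` is a simple module over `Mₙ(K(x))` and `Λ` contains multiples of all matrix units.
-/

section Indecomposable

variable {A : Type*} [Ring A] {M N : Type*} [AddCommGroup M] [Module A M] [AddCommGroup N]
  [Module A N]

/-- A module is indecomposable if it is nonzero and is not the internal direct sum of two nonzero
submodules. -/
def IsIndecomposable (A M : Type*) [Ring A] [AddCommGroup M] [Module A M] : Prop :=
  Nontrivial M ∧ ¬ ∃ P Q : Submodule A M, IsCompl P Q ∧ P ≠ ⊥ ∧ Q ≠ ⊥

theorem IsIndecomposable.of_linearEquiv (φ : M ≃ₗ[A] N) (hN : IsIndecomposable A N) :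
    IsIndecomposable A M := by
  have := hN.1
  let ψ := Submodule.orderIsoMapComap φ
  refine ⟨φ.toEquiv.nontrivial, fun ⟨P, Q, hPQ, hP, hQ⟩ => hN.2 ⟨ψ P, ψ Q, ?_, ?_, ?_⟩⟩
  · exact ψ.isCompl hPQ
  · exact (map_eq_bot_iff ψ).not.2 hP
  · exact (map_eq_bot_iff ψ).not.2 hQ

theorem IsIndecomposable.eq_one_of_isIdempotentElem (hM : IsIndecomposable A M)
    {e : Module.End A M} (he : IsIdempotentElem e) (he₀ : e ≠ 0) : e = 1 := by
  have hker : LinearMap.ker e = ⊥ := by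
    by_contra h
    exact hM.2 ⟨_, _, LinearMap.IsIdempotentElem.isCompl he, mt LinearMap.range_eq_bot.1 he₀, h⟩
  exact LinearMap.ext fun m => LinearMap.ker_eq_bot.1 hker (LinearMap.congr_fun he m)

theorem isIndecomposable_of_disjoint [Nontrivial M]
    (h : ∀ P Q : Submodule A M, Disjoint P Q → P = ⊥ ∨ Q = ⊥) : IsIndecomposable A M :=
  ⟨‹_›, fun ⟨P, Q, hPQ, hP, hQ⟩ => (h P Q hPQ.disjoint).elim hP hQ⟩

end Indecomposable

section SplitLines

open scoped Pointwise

variable {R L : Type*} [CommRing R] [AddCommGroup L] [Module R L]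

/-- A vector `b` and a functional `f` with `f b = 1` which split off, compatibly with a family
`N` of submodules of `L`, the line spanned by `b`: its intersection with `N k` is generated by
`π ^ d k • b`. -/
structure IsSplitLine {ι : Type*} (π : R) (N : ι → Submodule R L) (d : ι → ℕ) (b : L)
    (f : L →ₗ[R] R) : Prop where
  apply_eq_one : f b = 1
  pow_smul_mem : ∀ k, π ^ d k • b ∈ N k
  pow_dvd_apply : ∀ k, ∀ m ∈ N k, π ^ d k ∣ f m

/-- The properties of the chain `N k = E₀ₖ M` of submodules of the corner `L = E₀₀ M` of a
module `M` over the tiled order, completed by `N n = π ^ 2 L`. -/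
structure IsTiledChain (π : R) (n : ℕ) (N : ℕ → Submodule R L) : Prop where
  zero_eq_top : N 0 = ⊤
  antitone : Antitone N
  smul_mem_succ : ∀ k, k + 1 < n → ∀ m ∈ N k, π • m ∈ N (k + 1)
  le_smul_top : ∀ k, k + 1 = n → N k ≤ π • ⊤
  eq_sq_smul_top : N n = π ^ 2 • ⊤

/-- Here `i` is the last index with `N i ⊄ π L`, and `j` is the last index with `π • b ∈ N j` for
some `b ∈ N i` outside `π L`. -/
theorem IsTiledChain.exists_jumps [IsDomain R] [Module.IsTorsionFree R L] {π : R} {n : ℕ}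
    {N : ℕ → Submodule R L} (hN : IsTiledChain π n N) (hπ : π ≠ 0)
    (hL : ¬ (⊤ : Submodule R L) ≤ π • ⊤) :
    ∃ i j, i < j ∧ j < n ∧ N (i + 1) ≤ π • ⊤ ∧ ∃ b ∈ N i, π • b ∈ N j ∧ π • b ∉ N (j + 1) := by
  have hN_n : N n ≤ π • ⊤ := by
    rw [hN.eq_sq_smul_top, sq, mul_smul]
    exact Submodule.map_mono le_top
  have hπN_n : ∀ b : L, π • b ∈ N n → b ∈ π • (⊤ : Submodule R L) := by
    intro b hb
    rw [hN.eq_sq_smul_top, sq, mul_smul] at hb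
    obtain ⟨c, hc, hcb⟩ := hb
    exact smul_right_injective L hπ hcb ▸ hc
  obtain ⟨i, hi, hi_succ⟩ := Nat.exists_not_and_succ_of_not_zero_of_exists
    (p := fun k => N k ≤ π • ⊤) (hN.zero_eq_top ▸ hL) ⟨n, hN_n⟩
  have hin : i + 1 < n := by
    by_contra! h
    rcases h.lt_or_eq with h | h
    · exact hi ((hN.antitone (by omega)).trans hN_n)
    · exact hi (hN.le_smul_top i h.symm)
  obtain ⟨j, hj, hj_succ⟩ := Nat.exists_not_and_succ_of_not_zero_of_exists
    (p := fun k => ∀ b ∈ N i, π • b ∈ N k → b ∈ π • (⊤ : Submodule R L))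
    (fun h => hi fun b hb => h b hb (hN.zero_eq_top ▸ trivial)) ⟨n, fun b _ => hπN_n b⟩
  have hij : i < j := by
    by_contra! h
    exact hi fun b hb => hj_succ b hb
      (hN.antitone (by omega) (hN.smul_mem_succ i hin b hb))
  have hjn : j < n := by
    by_contra! h
    exact hj fun b _ hb => hπN_n b (hN.antitone h hb)
  push Not at hj
  obtain ⟨b, hbi, hbj, hb⟩ := hj
  exact ⟨i, j, hij, hjn, hi_succ, b, hbi, hbj, fun h => hb (hj_succ b hbi h)⟩

end SplitLines

section PID

open scoped Pointwise

variable {R L : Type*} [CommRing R] [IsDomain R] [IsPrincipalIdealRing R] [AddCommGroup L]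
  [Module R L] {π : R}

theorem exists_smul_eq_and_surjective {f : L →ₗ[R] R} (hf : f ≠ 0) :
    ∃ (r : R) (g : L →ₗ[R] R), f = r • g ∧ Function.Surjective g := by
  obtain ⟨r, hr⟩ := (IsPrincipalIdealRing.principal (LinearMap.range f)).principal
  have hr₀ : r ≠ 0 := by
    rintro rfl
    exact hf (LinearMap.range_eq_bot.1 (by simpa using hr))
  let e := LinearEquiv.toSpanNonzeroSingleton R R r hr₀ ≪≫ₗ LinearEquiv.ofEq _ _ hr.symm
  refine ⟨r, e.symm.toLinearMap ∘ₗ f.rangeRestrict, LinearMap.ext fun l => ?_,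
    e.symm.surjective.comp f.surjective_rangeRestrict⟩
  have he : ∀ s, (e s : R) = r * s := fun s => mul_comm s r
  exact (congrArg Subtype.val (e.apply_symm_apply (f.rangeRestrict l))).symm.trans (he _)

theorem exists_surjective_dvd_apply_of_notMem [Module.Projective R L] (hπ : Prime π)
    {C : Submodule R L} (hC : π • ⊤ ≤ C) {b : L} (hb : b ∉ C) :
    ∃ f : L →ₗ[R] R, Function.Surjective f ∧ (∀ c ∈ C, π ∣ f c) ∧ ¬ π ∣ f b := by
  -- Lift a functional on the vector space `L ⧸ C` over `R ⧸ (π)` and divide it by its content.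
  let I := Ideal.span {π}
  have : I.IsMaximal := PrincipalIdealRing.isMaximal_of_irreducible hπ.irreducible
  let _ : Field (R ⧸ I) := Ideal.Quotient.field I
  have htors : Module.IsTorsionBySet R (L ⧸ C) I := by
    refine (Module.isTorsionBySet_span_singleton_iff π).2 fun x => ?_
    obtain ⟨l, rfl⟩ := C.mkQ_surjective x
    rw [← map_smul]
    exact (Submodule.Quotient.mk_eq_zero C).2
      (hC (Submodule.smul_mem_pointwise_smul l π ⊤ trivial))
  let _ : Module (R ⧸ I) (L ⧸ C) := htors.module
  have : IsScalarTower R (R ⧸ I) (L ⧸ C) := htors.isScalarTower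
  obtain ⟨g, hgb⟩ := Module.Projective.exists_dual_ne_zero (R ⧸ I)
    (mt (Submodule.Quotient.mk_eq_zero C).1 hb)
  obtain ⟨f, hf⟩ := Module.projective_lifting_property I.mkQ (g.restrictScalars R ∘ₗ C.mkQ)
    I.mkQ_surjective
  have hdvd : ∀ l, π ∣ f l ↔ g (C.mkQ l) = 0 := fun l => by
    rw [← Ideal.mem_span_singleton, ← Ideal.Quotient.eq_zero_iff_mem]
    exact Eq.congr_left (LinearMap.congr_fun hf l)
  obtain ⟨r, f', rfl, hf'⟩ := exists_smul_eq_and_surjective (f := f)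
    (by rintro rfl; exact hgb ((hdvd b).1 (dvd_zero π)))
  have hr : ¬ π ∣ r := fun h => hgb ((hdvd b).1 (h.mul_right _))
  refine ⟨f', hf', fun c hc => (hπ.dvd_or_dvd ((hdvd c).2 ?_)).resolve_left hr,
    fun h => hgb ((hdvd b).1 (h.mul_left r))⟩
  rw [C.mkQ_apply, (Submodule.Quotient.mk_eq_zero C).2 hc, map_zero]

theorem exists_apply_smul_add_pow_smul_eq_one (hπ : Prime π) {f : L →ₗ[R] R}
    (hf : Function.Surjective f) {b : L} (hb : ¬ π ∣ f b) (n : ℕ) :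
    ∃ (p : R) (w : L), f (p • b + π ^ n • w) = 1 := by
  have hcoprime : IsCoprime (f b) (π ^ n) :=
    ((hπ.irreducible.coprime_iff_not_dvd).2 hb).symm.pow_right
  obtain ⟨p, q, hpq⟩ := hcoprime
  obtain ⟨w, rfl⟩ := hf q
  exact ⟨p, w, by rw [map_add, map_smul, map_smul, smul_eq_mul, smul_eq_mul, mul_comm (π ^ n), hpq]⟩

theorem not_top_le_smul_top [Module.Projective R L] [Nontrivial L] (hπ : Prime π) :
    ¬ (⊤ : Submodule R L) ≤ π • ⊤ := by
  obtain ⟨l, hl⟩ := exists_ne (0 : L)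
  obtain ⟨f, hf⟩ := Module.Projective.exists_dual_ne_zero R hl
  obtain ⟨-, g, -, hg⟩ := exists_smul_eq_and_surjective (f := f) (by rintro rfl; exact hf rfl)
  obtain ⟨b, hb⟩ := hg 1
  intro h
  obtain ⟨c, -, rfl⟩ := h (Submodule.mem_top (x := b))
  exact hπ.not_isUnit (IsUnit.of_mul_eq_one (g c) (by rw [← hb]; exact (map_smul g π c).symm))

theorem IsTiledChain.exists_isSplitLine [Module.Projective R L] [Nontrivial L] (hπ : Prime π)
    {n : ℕ} {N : ℕ → Submodule R L} (hN : IsTiledChain π n N) :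
    ∃ i j, 1 ≤ i ∧ i < j ∧ j ≤ n ∧ ∃ (b : L) (f : L →ₗ[R] R),
      IsSplitLine π (fun k : Fin n => N k) (fun k => (dExp i j k).toNat) b f := by
  obtain ⟨i, j, hij, hjn, hNi, b, hbi, hbj, hbj_succ⟩ :=
    hN.exists_jumps hπ.ne_zero (not_top_le_smul_top hπ)
  have hsq : ∀ k ≤ n, ∀ l : L, π ^ 2 • l ∈ N k := fun k hk l =>
    hN.antitone hk (hN.eq_sq_smul_top ▸ Submodule.smul_mem_pointwise_smul l _ ⊤ trivial)
  let C := (N (j + 1)).comap (LinearMap.lsmul R L π)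
  have hC : π • ⊤ ≤ C := by
    rintro _ ⟨l, -, rfl⟩
    simpa [C, smul_smul, sq] using hsq (j + 1) hjn l
  obtain ⟨f, hf, hfC, hfb⟩ := exists_surjective_dvd_apply_of_notMem hπ hC (b := b) hbj_succ
  obtain ⟨p, w, hfpw⟩ := exists_apply_smul_add_pow_smul_eq_one hπ hf hfb 2
  refine ⟨i + 1, j + 1, by omega, by omega, hjn, p • b + π ^ 2 • w, f, hfpw, fun k => ?_,
    fun k m hm => ?_⟩
  all_goals simp only [dExp]; split_ifs with hki hkj
  · rw [Int.toNat_zero, pow_zero, one_smul]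
    exact hN.antitone (by omega : (k : ℕ) ≤ i)
      (add_mem (Submodule.smul_mem _ p hbi) (hsq i (by omega) w))
  · rw [Int.toNat_one, pow_one, smul_add, smul_comm π p, smul_comm π (π ^ 2)]
    exact hN.antitone (by omega : (k : ℕ) ≤ j)
      (add_mem (Submodule.smul_mem _ p hbj) (hsq j hjn.le _))
  · exact hsq k k.2.le _
  · simp
  · obtain ⟨l, -, rfl⟩ := hNi (hN.antitone (by omega : i + 1 ≤ k) hm)
    simp
  · obtain ⟨c, -, rfl⟩ := hNi (hN.antitone (by omega : i + 1 ≤ k) hm)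
    have hc : π ∣ f c := hfC c (hN.antitone (by omega : j + 1 ≤ k) hm)
    simpa [sq] using mul_dvd_mul_left π hc

end PID

section ExponentSets

variable {K : Type*} [Field K]

theorem X_zpow_mem_xPow {a c : ℤ} (h : c ≤ a) : (RatFunc.X : RatFunc K) ^ a ∈ xPow K c := by
  refine ⟨X ^ (a - c).toNat, ?_⟩
  rw [map_pow, RatFunc.algebraMap_X, ← zpow_natCast, ← zpow_add₀ RatFunc.X_ne_zero,
    Int.toNat_of_nonneg (sub_nonneg.2 h), add_sub_cancel]

theorem mem_xPow_iff_of_nonneg {c : ℤ} (hc : 0 ≤ c) {f : RatFunc K} :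
    f ∈ xPow K c ↔ ∃ p : K[X], X ^ c.toNat ∣ p ∧ algebraMap K[X] (RatFunc K) p = f := by
  have hX : (RatFunc.X : RatFunc K) ^ c = algebraMap K[X] (RatFunc K) (X ^ c.toNat) := by
    rw [map_pow, RatFunc.algebraMap_X, ← zpow_natCast, Int.toNat_of_nonneg hc]
  constructor
  · rintro ⟨p, rfl⟩
    exact ⟨X ^ c.toNat * p, dvd_mul_right _ _, by rw [hX, map_mul]⟩
  · rintro ⟨_, ⟨p, rfl⟩, rfl⟩
    exact ⟨p, by rw [hX, map_mul]⟩

theorem exists_algebraMap_eq_X_mul_of_mem_xPow {c : ℤ} (hc : -1 ≤ c) {f : RatFunc K}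
    (hf : f ∈ xPow K c) : ∃ p : K[X], algebraMap K[X] (RatFunc K) p = RatFunc.X * f := by
  obtain ⟨p, rfl⟩ := hf
  obtain ⟨q, -, hq⟩ := (mem_xPow_iff_of_nonneg (c := 1 + c) (by omega)).1 ⟨p, rfl⟩
  exact ⟨q, by rw [hq, zpow_add₀ RatFunc.X_ne_zero, zpow_one, mul_assoc]⟩

theorem dExp_nonneg (i j k : ℕ) : 0 ≤ dExp i j k := by
  unfold dExp
  split_ifs <;> norm_num

variable {n : ℕ} (i j : Fin n)

theorem neg_one_le_cExp : -1 ≤ cExp n i j := by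
  unfold cExp
  split_ifs <;> norm_num

theorem cExp_le_two : cExp n i j ≤ 2 := by
  unfold cExp
  split_ifs <;> norm_num

variable {i j}

theorem cExp_nonpos_of_le (h : i ≤ j) : cExp n i j ≤ 0 := by
  have : (i : ℕ) ≤ j := h
  unfold cExp
  split_ifs <;> omega

theorem cExp_le_one_of_eq_succ (h : (i : ℕ) = j + 1) : cExp n i j ≤ 1 := by
  unfold cExp
  split_ifs <;> omega

theorem cExp_zero_last [NeZero n] (hj : (j : ℕ) + 1 = n) : cExp n 0 j = -1 := by
  have : (j : ℕ) = n - 1 := by omega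
  simp [cExp, this]

end ExponentSets

section TiledOrder

variable {K : Type*} [Field K] {n : ℕ} {Λ : Subalgebra K[X] (Matrix (Fin n) (Fin n) (RatFunc K))}
  (hΛ : (Λ : Set (Matrix (Fin n) (Fin n) (RatFunc K))) = lambdaCarrier K n)

/-- The matrix unit `X ^ a • Eᵢⱼ` as an element of the tiled order. -/
def tiledUnit {i j : Fin n} {a : ℤ} (h : cExp n i j ≤ a) : Λ :=
  ⟨Matrix.single i j (RatFunc.X ^ a), by
    rw [← SetLike.mem_coe, hΛ]
    intro k l
    rw [Matrix.single_apply]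
    split_ifs with hkl
    · exact hkl.1 ▸ hkl.2 ▸ X_zpow_mem_xPow h
    · exact ⟨0, by simp⟩⟩

theorem tiledUnit_mul {i j k : Fin n} {a b c : ℤ} (hij : cExp n i j ≤ a) (hjk : cExp n j k ≤ b)
    (hik : cExp n i k ≤ c) (hc : a + b = c) :
    tiledUnit hΛ hij * tiledUnit hΛ hjk = tiledUnit hΛ hik := by
  subst hc
  ext1
  simp [tiledUnit, zpow_add₀ (RatFunc.X_ne_zero (K := K))]

theorem tiledUnit_mul_of_ne {i j k l : Fin n} {a b : ℤ} (hij : cExp n i j ≤ a)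
    (hkl : cExp n k l ≤ b) (hjk : j ≠ k) : tiledUnit hΛ hij * tiledUnit hΛ hkl = 0 := by
  ext1
  simp [tiledUnit, hjk]

theorem X_pow_smul_tiledUnit {i j : Fin n} {a b : ℤ} (m : ℕ) (ha : cExp n i j ≤ a)
    (hb : cExp n i j ≤ b) (hab : a + m = b) :
    (X ^ m : K[X]) • tiledUnit hΛ ha = tiledUnit hΛ hb := by
  subst hab
  ext1
  simp [tiledUnit, Matrix.smul_single, Algebra.smul_def (A := RatFunc K),
    zpow_add₀ (RatFunc.X_ne_zero (K := K)), mul_comm]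

/-- The diagonal idempotent `Eₖₖ` of the tiled order. -/
def diagUnit (k : Fin n) : Λ := tiledUnit hΛ (cExp_nonpos_of_le (le_refl k))

theorem sum_diagUnit : ∑ k, diagUnit hΛ k = 1 := by
  ext1
  simp [diagUnit, tiledUnit, Matrix.sum_single_one]

variable [NeZero n]

/-- The matrix unit `E₀ₖ` of the tiled order. Left multiplication by `E₀ₖ` maps a module `M` into
its corner `E₀₀ M`, and the images of these maps determine `M`. -/
def rowUnit (k : Fin n) : Λ := tiledUnit hΛ (cExp_nonpos_of_le (Fin.zero_le k))

theorem rowUnit_zero_mul_rowUnit (k : Fin n) : rowUnit hΛ 0 * rowUnit hΛ k = rowUnit hΛ k :=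
  tiledUnit_mul hΛ _ _ _ (add_zero 0)

theorem rowUnit_mul_diagUnit (k l : Fin n) :
    rowUnit hΛ k * diagUnit hΛ l = if k = l then rowUnit hΛ k else 0 := by
  split_ifs with h
  · subst h
    exact tiledUnit_mul hΛ _ _ _ (add_zero 0)
  · exact tiledUnit_mul_of_ne hΛ _ _ h

theorem X_pow_smul_rowUnit {k l : Fin n} {a : ℕ} (h : cExp n k l ≤ a) :
    (X ^ a : K[X]) • rowUnit hΛ l = rowUnit hΛ k * tiledUnit hΛ h := by
  have h₀ : cExp n 0 l ≤ a := (cExp_nonpos_of_le (Fin.zero_le l)).trans a.cast_nonneg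
  rw [rowUnit, rowUnit, X_pow_smul_tiledUnit hΛ a _ h₀ (zero_add _),
    tiledUnit_mul hΛ _ h h₀ (zero_add _)]

theorem X_sq_smul_diagUnit (k : Fin n) :
    (X ^ 2 : K[X]) • diagUnit hΛ k = tiledUnit hΛ (cExp_le_two k 0) * rowUnit hΛ k := by
  rw [diagUnit, rowUnit, X_pow_smul_tiledUnit hΛ 2 _ (cExp_le_two k k) (by norm_num),
    tiledUnit_mul hΛ _ _ _ (add_zero 2)]

theorem exists_X_smul_rowUnit_zero_mul_eq_rowUnit {k : Fin n} (hk : (k : ℕ) + 1 = n) :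
    ∃ a : Λ, (X : K[X]) • (rowUnit hΛ 0 * a) = rowUnit hΛ k := by
  have h := (cExp_zero_last hk).le
  refine ⟨tiledUnit hΛ h, ?_⟩
  have h₀ := cExp_nonpos_of_le (Fin.zero_le k)
  rw [rowUnit, rowUnit, tiledUnit_mul hΛ _ h h (zero_add _), ← pow_one X,
    X_pow_smul_tiledUnit hΛ 1 h h₀ (by norm_num)]

theorem exists_X_smul_rowUnit_mul_eq_sum (k : Fin n) (a : Λ) :
    ∃ p : Fin n → K[X], (X : K[X]) • (rowUnit hΛ k * a) = ∑ l, p l • rowUnit hΛ l := by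
  have ha : (a : Matrix (Fin n) (Fin n) (RatFunc K)) ∈ lambdaCarrier K n := hΛ ▸ a.2
  choose p hp using fun l => exists_algebraMap_eq_X_mul_of_mem_xPow (neg_one_le_cExp k l) (ha k l)
  refine ⟨p, Subtype.ext (Matrix.ext fun r s => ?_)⟩
  by_cases hr : r = 0
  · subst hr
    simp [rowUnit, tiledUnit, Matrix.sum_apply, Matrix.single_apply,
      Algebra.smul_def (A := RatFunc K), hp]
  · simp [rowUnit, tiledUnit, Matrix.sum_apply, hr, Ne.symm hr]

end TiledOrder

section Modules

variable {K : Type*} [Field K] {n : ℕ} [NeZero n]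
  {Λ : Subalgebra K[X] (Matrix (Fin n) (Fin n) (RatFunc K))}
  (hΛ : (Λ : Set (Matrix (Fin n) (Fin n) (RatFunc K))) = lambdaCarrier K n)
  {M : Type*} [AddCommGroup M] [Module Λ M]

section Reconstruction

theorem exists_forall_rowUnit_smul_eq (m : Fin n → M) :
    ∃ m' : M, ∀ k, rowUnit hΛ k • m' = rowUnit hΛ k • m k :=
  ⟨∑ l, diagUnit hΛ l • m l, fun k => by
    simp [Finset.smul_sum, smul_smul, rowUnit_mul_diagUnit, ite_smul]⟩

variable [Module K[X] M] [IsScalarTower K[X] Λ M] {M' : Type*} [AddCommGroup M'] [Module Λ M']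
  [Module K[X] M'] [IsScalarTower K[X] Λ M']

theorem eq_of_rowUnit_smul_eq [Module.IsTorsionFree K[X] M] {m m' : M}
    (h : ∀ k, rowUnit hΛ k • m = rowUnit hΛ k • m') : m = m' := by
  have hdiag : ∀ k, (X ^ 2 : K[X]) • diagUnit hΛ k • m = (X ^ 2 : K[X]) • diagUnit hΛ k • m' :=
    fun k => by
      rw [← smul_assoc, ← smul_assoc, X_sq_smul_diagUnit, mul_smul, mul_smul, h]
  rw [← one_smul Λ m, ← one_smul Λ m', ← sum_diagUnit hΛ, Finset.sum_smul, Finset.sum_smul]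
  exact Finset.sum_congr rfl fun k _ =>
    smul_right_injective M (pow_ne_zero 2 Polynomial.X_ne_zero) (hdiag k)

theorem X_smul_rowUnit_smul_smul_eq_sum {k : Fin n} {a : Λ} {p : Fin n → K[X]}
    (hp : (X : K[X]) • (rowUnit hΛ k * a) = ∑ l, p l • rowUnit hΛ l) (m : M) :
    (X : K[X]) • rowUnit hΛ k • a • m = ∑ l, p l • rowUnit hΛ l • m := by
  rw [smul_smul (rowUnit hΛ k), ← smul_assoc, hp, Finset.sum_smul]
  simp only [smul_assoc]

/-- In other words, the functor sending a Cohen–Macaulay module to the family of submodules `E₀ₖ M`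
of its corner is full: multiplication by `X` makes all entries of an element of `Λ` polynomials, so
`K[X]`-linearity implies `Λ`-linearity. -/
theorem exists_linearMap_rowUnit_smul_eq [Module.IsTorsionFree K[X] M'] (g : M →ₗ[K[X]] M')
    (hg : ∀ k m, ∃ m', rowUnit hΛ k • m' = g (rowUnit hΛ k • m)) :
    ∃ φ : M →ₗ[Λ] M', ∀ k m, rowUnit hΛ k • φ m = g (rowUnit hΛ k • m) := by
  have hφ : ∀ m, ∃ m', ∀ k, rowUnit hΛ k • m' = g (rowUnit hΛ k • m) := fun m => by
    choose m' hm' using fun k => hg k m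
    obtain ⟨m'', hm''⟩ := exists_forall_rowUnit_smul_eq hΛ m'
    exact ⟨m'', fun k => (hm'' k).trans (hm' k)⟩
  choose φ hφ using hφ
  refine ⟨⟨⟨φ, fun m m' => ?_⟩, fun a m => ?_⟩, fun k m => hφ m k⟩
  · refine eq_of_rowUnit_smul_eq hΛ fun k => ?_
    rw [smul_add, hφ, hφ, hφ, smul_add, map_add]
  · refine eq_of_rowUnit_smul_eq hΛ fun k =>
      smul_right_injective M' (Polynomial.X_ne_zero (R := K)) ?_
    obtain ⟨p, hp⟩ := exists_X_smul_rowUnit_mul_eq_sum hΛ k a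
    calc (X : K[X]) • rowUnit hΛ k • φ (a • m)
        = g ((X : K[X]) • rowUnit hΛ k • a • m) := by rw [hφ, g.map_smul]
      _ = ∑ l, p l • g (rowUnit hΛ l • m) := by
          simp only [X_smul_rowUnit_smul_smul_eq_sum hΛ hp, map_sum, map_smul]
      _ = (X : K[X]) • rowUnit hΛ k • a • φ m := by
          simp only [X_smul_rowUnit_smul_smul_eq_sum hΛ hp, hφ]

end Reconstruction

section Corner

open scoped Pointwise

variable [Module K[X] M] [IsScalarTower K[X] Λ M] (M)

/-- The action of `E₀ₖ` on a `Λ`-module. -/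
def rowMap (k : Fin n) : Module.End K[X] M := Algebra.lsmul K[X] K[X] M (rowUnit hΛ k)

@[simp]
theorem rowMap_apply (k : Fin n) (m : M) : rowMap hΛ M k m = rowUnit hΛ k • m := rfl

/-- The corner `E₀₀ M`. -/
def corner : Submodule K[X] M := LinearMap.range (rowMap hΛ M 0)

/-- The action of `E₀ₖ`, as a map into the corner. -/
def cornerMap (k : Fin n) : M →ₗ[K[X]] corner hΛ M :=
  (rowMap hΛ M k).codRestrict _ fun m => ⟨rowMap hΛ M k m, by
    simp only [rowMap_apply, smul_smul, rowUnit_zero_mul_rowUnit]⟩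

variable {M}

@[simp]
theorem coe_cornerMap_apply (k : Fin n) (m : M) :
    (cornerMap hΛ M k m : M) = rowUnit hΛ k • m := rfl

@[simp]
theorem cornerMap_zero_coe (l : corner hΛ M) : cornerMap hΛ M 0 l = l := by
  obtain ⟨_, m, rfl⟩ := l
  ext1
  simp [smul_smul, rowUnit_zero_mul_rowUnit]

theorem nontrivial_corner [Module.IsTorsionFree K[X] M] [Nontrivial M] :
    Nontrivial (corner hΛ M) := by
  by_contra h
  rw [not_nontrivial_iff_subsingleton] at h
  obtain ⟨m, hm⟩ := exists_ne (0 : M)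
  exact hm (eq_of_rowUnit_smul_eq hΛ fun k =>
    congrArg Subtype.val (Subsingleton.elim (cornerMap hΛ M k m) (cornerMap hΛ M k 0)))

variable (M)

/-- The chain `E₀₀ M ⊇ E₀₁ M ⊇ ⋯` of submodules of the corner, continued by `X ^ 2 E₀₀ M` from the
index `n` on. -/
def cornerChain (k : ℕ) : Submodule K[X] (corner hΛ M) :=
  if h : k < n then LinearMap.range (cornerMap hΛ M ⟨k, h⟩) else (X ^ 2 : K[X]) • ⊤

variable {M}

theorem cornerChain_coe (k : Fin n) :
    cornerChain hΛ M k = LinearMap.range (cornerMap hΛ M k) := dif_pos k.2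

theorem cornerChain_of_le {k : ℕ} (h : n ≤ k) : cornerChain hΛ M k = (X ^ 2 : K[X]) • ⊤ :=
  dif_neg h.not_gt

theorem cornerChain_zero : cornerChain hΛ M 0 = ⊤ := by
  rw [← Fin.val_zero n, cornerChain_coe, LinearMap.range_eq_top]
  exact fun l => ⟨l, cornerMap_zero_coe hΛ l⟩

theorem X_pow_smul_mem_cornerChain {k l : Fin n} {a : ℕ} (h : cExp n k l ≤ a) {x : corner hΛ M}
    (hx : x ∈ cornerChain hΛ M l) : (X ^ a : K[X]) • x ∈ cornerChain hΛ M k := by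
  rw [cornerChain_coe] at hx ⊢
  obtain ⟨m, rfl⟩ := hx
  refine ⟨tiledUnit hΛ h • m, Subtype.ext ?_⟩
  simp [smul_smul, ← X_pow_smul_rowUnit]

theorem cornerChain_le_X_smul_top {k : ℕ} (hk : k + 1 = n) :
    cornerChain hΛ M k ≤ (X : K[X]) • ⊤ := by
  intro x hx
  obtain ⟨m, rfl⟩ := (cornerChain_coe hΛ ⟨k, by omega⟩).le hx
  obtain ⟨a, ha⟩ := exists_X_smul_rowUnit_zero_mul_eq_rowUnit hΛ (k := ⟨k, by omega⟩) hk
  refine ⟨cornerMap hΛ M 0 (a • m), trivial, Subtype.ext ?_⟩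
  simp [smul_smul, ← ha]

theorem antitone_cornerChain : Antitone (cornerChain hΛ M) := by
  refine antitone_nat_of_succ_le fun k x hx => ?_
  rcases lt_or_ge (k + 1) n with h | h
  · simpa using X_pow_smul_mem_cornerChain hΛ (k := ⟨k, by omega⟩) (l := ⟨k + 1, h⟩) (a := 0)
      (cExp_nonpos_of_le k.le_succ) hx
  rw [cornerChain_of_le hΛ h] at hx
  rcases lt_or_ge k n with hk | hk
  · obtain ⟨y, -, rfl⟩ := hx
    exact X_pow_smul_mem_cornerChain hΛ (k := ⟨k, hk⟩) (l := 0) (a := 2) (cExp_le_two _ _)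
      (by simp [cornerChain_zero])
  · rwa [cornerChain_of_le hΛ hk]

theorem isTiledChain_cornerChain : IsTiledChain (X : K[X]) n (cornerChain hΛ M) where
  zero_eq_top := cornerChain_zero hΛ
  antitone := antitone_cornerChain hΛ
  smul_mem_succ k hk x hx := by
    simpa using X_pow_smul_mem_cornerChain hΛ (k := ⟨k + 1, hk⟩) (l := ⟨k, by omega⟩) (a := 1)
      (cExp_le_one_of_eq_succ rfl) hx
  le_smul_top _ hk := cornerChain_le_X_smul_top hΛ hk
  eq_sq_smul_top := cornerChain_of_le hΛ le_rfl

theorem exists_isSplitLine_range_rowMap [Module.Finite K[X] M] [Module.IsTorsionFree K[X] M]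
    [Nontrivial M] : ∃ i j, 1 ≤ i ∧ i < j ∧ j ≤ n ∧ ∃ (b : M) (F : M →ₗ[K[X]] K[X]),
      IsSplitLine X (fun k => LinearMap.range (rowMap hΛ M k)) (fun k => (dExp i j k).toNat)
        b F := by
  have := nontrivial_corner hΛ (M := M)
  obtain ⟨i, j, hi, hij, hj, b, f, hf⟩ :=
    (isTiledChain_cornerChain hΛ (M := M)).exists_isSplitLine Polynomial.prime_X
  refine ⟨i, j, hi, hij, hj, b, f ∘ₗ cornerMap hΛ M 0, ?_, fun k => ?_, ?_⟩
  · simpa using hf.apply_eq_one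
  · obtain ⟨m, hm⟩ := (cornerChain_coe hΛ k).le (hf.pow_smul_mem k)
    exact ⟨m, congrArg Subtype.val hm⟩
  · rintro k _ ⟨m, rfl⟩
    have hm : cornerMap hΛ M k m ∈ cornerChain hΛ M k := by
      rw [cornerChain_coe]
      exact ⟨m, rfl⟩
    have hdvd := hf.pow_dvd_apply k _ hm
    rwa [← cornerMap_zero_coe hΛ (cornerMap hΛ M k m)] at hdvd

end Corner

section Columns

instance isScalarTower_column : IsScalarTower K[X] (Matrix (Fin n) (Fin n) (RatFunc K))
    (Fin n → RatFunc K) :=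
  ⟨fun p A v => Matrix.smul_mulVec p A v⟩

theorem rowUnit_smul_column (k : Fin n) (v : Fin n → RatFunc K) :
    rowUnit hΛ k • v = Pi.single 0 (v k) := by
  change Matrix.single 0 k ((RatFunc.X : RatFunc K) ^ (0 : ℤ)) *ᵥ v = _
  rw [Matrix.single_mulVec, zpow_zero, one_mul]
  rfl

theorem exists_smul_eq_smul_ne_zero
    (hΛ : (Λ : Set (Matrix (Fin n) (Fin n) (RatFunc K))) = lambdaCarrier K n)
    {u v : Fin n → RatFunc K} (hu : u ≠ 0) (hv : v ≠ 0) :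
    ∃ a c : Λ, a • u = c • v ∧ a • u ≠ 0 := by
  obtain ⟨k, hk⟩ := Function.ne_iff.1 hu
  obtain ⟨l, hl⟩ := Function.ne_iff.1 hv
  obtain ⟨p, q, hq, hpq⟩ := IsFractionRing.div_surjective K[X] (u k / v l)
  have hq₀ : algebraMap K[X] (RatFunc K) q ≠ 0 := by simpa using nonZeroDivisors.ne_zero hq
  have hqu : q • u k = p • v l := by
    rw [Algebra.smul_def, Algebra.smul_def, mul_comm, ← div_eq_div_iff hl hq₀, hpq]
  refine ⟨q • rowUnit hΛ k, p • rowUnit hΛ l, ?_, ?_⟩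
  · rw [smul_assoc, smul_assoc, rowUnit_smul_column, rowUnit_smul_column, ← Pi.single_smul,
      ← Pi.single_smul, hqu]
  · rw [smul_assoc, rowUnit_smul_column, ← Pi.single_smul, Pi.single_ne_zero_iff, Algebra.smul_def]
    exact mul_ne_zero hq₀ hk

theorem isIndecomposable_of_le_columns
    (hΛ : (Λ : Set (Matrix (Fin n) (Fin n) (RatFunc K))) = lambdaCarrier K n)
    (E : Submodule Λ (Fin n → RatFunc K)) [Nontrivial E] :
    IsIndecomposable Λ E := by
  refine isIndecomposable_of_disjoint fun P Q hPQ => ?_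
  by_contra! h
  obtain ⟨u, hu, hu₀⟩ := P.ne_bot_iff.1 h.1
  obtain ⟨v, hv, hv₀⟩ := Q.ne_bot_iff.1 h.2
  obtain ⟨a, c, hac, ha₀⟩ := exists_smul_eq_smul_ne_zero hΛ
    (fun h => hu₀ (Subtype.ext h)) (fun h => hv₀ (Subtype.ext h))
  have hau : a • u = c • v := Subtype.ext hac
  exact ha₀ (congrArg Subtype.val
    (Submodule.disjoint_def.1 hPQ _ (P.smul_mem a hu) (hau ▸ Q.smul_mem c hv)))

theorem nontrivial_of_coe_eq_ijSet {i j : ℕ} {E : Submodule Λ (Fin n → RatFunc K)}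
    (hE : (E : Set (Fin n → RatFunc K)) = ijSet K n i j) : Nontrivial E := by
  have hX : (fun k : Fin n => (RatFunc.X : RatFunc K) ^ dExp i j k) ∈ E := by
    rw [← SetLike.mem_coe, hE]
    exact fun k => X_zpow_mem_xPow le_rfl
  exact ⟨⟨_, hX⟩, 0, fun h =>
    zpow_ne_zero _ RatFunc.X_ne_zero (congrFun (congrArg Subtype.val h) 0)⟩

end Columns

section Classification

variable [Module K[X] M] [IsScalarTower K[X] Λ M] {b : M} {F : M →ₗ[K[X]] K[X]} {d : Fin n → ℕ}

theorem IsSplitLine.exists_rowUnit_smul_eq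
    (h : IsSplitLine X (fun k => LinearMap.range (rowMap hΛ M k)) d b F) {p : Fin n → K[X]}
    (hp : ∀ k, X ^ d k ∣ p k) : ∃ m : M, ∀ k, rowUnit hΛ k • m = p k • b := by
  choose q hq using hp
  choose m hm using h.pow_smul_mem
  obtain ⟨m', hm'⟩ := exists_forall_rowUnit_smul_eq hΛ fun k => q k • m k
  refine ⟨m', fun k => ?_⟩
  rw [hm', smul_comm, ← rowMap_apply, hm, smul_smul, hq, mul_comm]

theorem IsSplitLine.rowUnit_smul_eq [Module.IsTorsionFree K[X] M]
    (h : IsSplitLine X (fun k => LinearMap.range (rowMap hΛ M k)) d b F) (hd : d 0 = 0)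
    (hM : IsIndecomposable Λ M) (k : Fin n) (m : M) :
    rowUnit hΛ k • m = F (rowUnit hΛ k • m) • b := by
  have hF : ∀ p : K[X], F (p • b) = p := fun p => by
    rw [map_smul, h.apply_eq_one, smul_eq_mul, mul_one]
  obtain ⟨e, he⟩ := exists_linearMap_rowUnit_smul_eq hΛ (F.smulRight b) fun k m => by
    obtain ⟨q, hq⟩ := h.pow_dvd_apply k _ ⟨m, rfl⟩
    obtain ⟨m', hm'⟩ := h.pow_smul_mem k
    refine ⟨q • m', ?_⟩
    rw [smul_comm, ← rowMap_apply, hm', smul_smul, mul_comm, ← hq]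
    rfl
  simp only [LinearMap.smulRight_apply] at he
  have he_idem : IsIdempotentElem e := LinearMap.ext fun m =>
    eq_of_rowUnit_smul_eq hΛ fun k => by rw [Module.End.mul_apply, he, he, hF]
  have hb : rowUnit hΛ 0 • b = b := by
    obtain ⟨m, hm⟩ := h.pow_smul_mem 0
    rw [hd, pow_zero, one_smul] at hm
    rw [← hm, rowMap_apply, smul_smul, rowUnit_zero_mul_rowUnit]
  have he_ne : e ≠ 0 := by
    rintro rfl
    have hb₀ := he 0 b
    rw [hb, h.apply_eq_one, one_smul, LinearMap.zero_apply, smul_zero] at hb₀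
    have := h.apply_eq_one
    simp [← hb₀] at this
  rw [← he, hM.eq_one_of_isIdempotentElem he_idem he_ne, Module.End.one_apply]

theorem exists_linearMap_column_apply_eq (F : M →ₗ[K[X]] K[X]) :
    ∃ φ : M →ₗ[Λ] (Fin n → RatFunc K),
      ∀ m k, φ m k = algebraMap K[X] (RatFunc K) (F (rowUnit hΛ k • m)) := by
  have : Module.IsTorsionFree K[X] (RatFunc K) :=
    Module.isTorsionFree_iff_faithfulSMul.2 inferInstance
  obtain ⟨φ, hφ⟩ := exists_linearMap_rowUnit_smul_eq hΛ
    (LinearMap.single K[X] (fun _ : Fin n => RatFunc K) 0 ∘ₗ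
      Algebra.linearMap K[X] (RatFunc K) ∘ₗ F)
    fun k m => ⟨fun _ => algebraMap K[X] (RatFunc K) (F (rowUnit hΛ k • m)), by
      rw [rowUnit_smul_column]
      rfl⟩
  refine ⟨φ, fun m k => ?_⟩
  have := hφ k m
  rw [rowUnit_smul_column] at this
  exact Pi.single_injective 0 this

theorem IsIndecomposable.exists_linearEquiv
    (hΛ : (Λ : Set (Matrix (Fin n) (Fin n) (RatFunc K))) = lambdaCarrier K n)
    [Module.Finite K[X] M] [Module.IsTorsionFree K[X] M] (hM : IsIndecomposable Λ M)
    {E : ℕ → ℕ → Submodule Λ (Fin n → RatFunc K)}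
    (hE : ∀ i j : ℕ, 1 ≤ i → i < j → j ≤ n →
      (E i j : Set (Fin n → RatFunc K)) = ijSet K n i j) :
    ∃ i j : ℕ, 1 ≤ i ∧ i < j ∧ j ≤ n ∧ Nonempty (M ≃ₗ[Λ] E i j) := by
  have := hM.1
  obtain ⟨i, j, hi, hij, hj, b, F, h⟩ := exists_isSplitLine_range_rowMap hΛ (M := M)
  have hd : (dExp i j (0 : Fin n)).toNat = 0 := by simp [dExp, hi]
  obtain ⟨φ, hφ⟩ := exists_linearMap_column_apply_eq hΛ F
  have hφ_inj : Function.Injective φ := fun m m' hm => eq_of_rowUnit_smul_eq hΛ fun k => by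
    have hF := congrFun hm k
    rw [hφ, hφ] at hF
    rw [h.rowUnit_smul_eq hΛ hd hM, h.rowUnit_smul_eq hΛ hd hM k m',
      IsFractionRing.injective K[X] (RatFunc K) hF]
  have hφ_range : LinearMap.range φ = E i j := by
    refine SetLike.coe_injective ((hE i j hi hij hj).symm ▸ Set.ext fun v => ?_)
    simp only [ijSet, mem_xPow_iff_of_nonneg (dExp_nonneg _ _ _)]
    constructor
    · rintro ⟨m, rfl⟩ k
      exact ⟨_, h.pow_dvd_apply k _ ⟨m, rfl⟩, (hφ m k).symm⟩
    · intro hv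
      choose p hp hpv using hv
      obtain ⟨m, hm⟩ := h.exists_rowUnit_smul_eq hΛ hp
      refine ⟨m, funext fun k => ?_⟩
      rw [hφ, hm, map_smul, h.apply_eq_one, smul_eq_mul, mul_one, hpv]
  exact ⟨i, j, hi, hij, hj,
    ⟨LinearEquiv.ofInjective φ hφ_inj ≪≫ₗ LinearEquiv.ofEq _ _ hφ_range⟩⟩

end Classification

end Modules

theorem statement4_general {K : Type*} [Field K] {n : ℕ} [NeZero n]
    {Λ : Subalgebra K[X] (Matrix (Fin n) (Fin n) (RatFunc K))}
    (hΛ : (Λ : Set (Matrix (Fin n) (Fin n) (RatFunc K))) = lambdaCarrier K n)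
    {E : ℕ → ℕ → Submodule Λ (Fin n → RatFunc K)}
    (hE : ∀ i j : ℕ, 1 ≤ i → i < j → j ≤ n →
      (E i j : Set (Fin n → RatFunc K)) = ijSet K n i j)
    {M : Type*} [AddCommGroup M] [Module Λ M] [Module K[X] M] [IsScalarTower K[X] Λ M]
    [Module.Finite K[X] M] [Module.IsTorsionFree K[X] M] :
    IsIndecomposable Λ M ↔ ∃ i j : ℕ, 1 ≤ i ∧ i < j ∧ j ≤ n ∧ Nonempty (M ≃ₗ[Λ] E i j) := by
  refine ⟨fun hM => hM.exists_linearEquiv hΛ hE, ?_⟩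
  rintro ⟨i, j, hi, hij, hj, ⟨φ⟩⟩
  have := nontrivial_of_coe_eq_ijSet (hE i j hi hij hj)
  exact (isIndecomposable_of_le_columns hΛ (E i j)).of_linearEquiv φ

/-- Classification of indecomposable Cohen–Macaulay `Λ`-modules: a Cohen–Macaulay `Λ`-module
`M` is indecomposable if and only if it is isomorphic to `(i,j)` for some `1 ≤ i < j ≤ n`. -/
theorem statement4 (K : Type) [Field K] (n : ℕ) (hn : 3 ≤ n)
    (Λ : Subalgebra (Polynomial K) (Matrix (Fin n) (Fin n) (RatFunc K)))
    (hΛ : (Λ : Set (Matrix (Fin n) (Fin n) (RatFunc K))) = lambdaCarrier K n)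
    (E : ℕ → ℕ → Submodule ↥Λ (Fin n → RatFunc K))
    (hE : ∀ i j : ℕ, 1 ≤ i → i < j → j ≤ n →
      (E i j : Set (Fin n → RatFunc K)) = ijSet K n i j)
    (M : Type u) [AddCommGroup M] [Module ↥Λ M]
    [Module (Polynomial K) M] [IsScalarTower (Polynomial K) ↥Λ M]
    (hfin : Module.Finite (Polynomial K) M)
    (htf : NoZeroSMulDivisors (Polynomial K) M) :
    (Nontrivial M ∧ ¬ ∃ A B : Submodule ↥Λ M, IsCompl A B ∧ A ≠ ⊥ ∧ B ≠ ⊥)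
      ↔ ∃ i j : ℕ, 1 ≤ i ∧ i < j ∧ j ≤ n ∧ Nonempty (M ≃ₗ[↥Λ] ↥(E i j)) := by
  have : NeZero n := ⟨by omega⟩
  exact statement4_general hΛ hE
end
end

section
/- For 1 ≤ s < t ≤ n, the Λ-module (s,t) is projective if and only if t = s + 1 or (s,t) = (1,n). Consequently, the indecomposable projective Cohen–Macaulay Λ-modules are, up to isomorphism, exactly the n modules (1,2), (2,3), …, (n−1,n), (1,n), corresponding to the n sides of the polygon. -/
set_option synthInstance.maxHeartbeats 1000000
set_option maxHeartbeats 1000000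

open Polynomial Matrix

noncomputable section

universe u

/-!
Every projective module `M ≠ 0` over a tiled order `Λ` maps onto a column of `Λ`. By the dual basis
property some homomorphism `ψ` from `M` to a column of `Λ`, say the `i`-th, has `i`-th coordinates
not all divisible by `x`. The `i`-th coordinates of `ψ M` form a principal ideal `(g)` of `K[x]`
with `g` prime to `x`, and because the entries of `Λ` are constrained only at `x`, the image `ψ M`
is `g` times the whole column. Since columns are projective, the surjection splits, so an
indecomposable projective module is a column. Homomorphisms between lattices in `K(x)^n` are
homotheties, so a lattice `⨁ₖ x^{dₖ}·K[x]` is projective exactly when `d` is a column of the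
exponent matrix up to an additive constant. Up to such constants, the columns of `(c_{ij})` are the
exponents of the sides of the polygon.
-/

section xPow

variable {K : Type*} [Field K]

lemma xPow_eq_coe_span (c : ℤ) :
    xPow K c = (Submodule.span K[X] {(RatFunc.X : RatFunc K) ^ c} : Set (RatFunc K)) := by
  ext f
  simp only [xPow, Set.mem_ofPred_eq, SetLike.mem_coe, Submodule.mem_span_singleton,
    Algebra.smul_def, eq_comm, mul_comm]

lemma zero_mem_xPow (c : ℤ) : (0 : RatFunc K) ∈ xPow K c := by
  rw [xPow_eq_coe_span]
  exact zero_mem _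

lemma sum_mem_xPow {ι : Type*} {s : Finset ι} {f : ι → RatFunc K} {c : ℤ}
    (h : ∀ i ∈ s, f i ∈ xPow K c) : ∑ i ∈ s, f i ∈ xPow K c := by
  rw [xPow_eq_coe_span] at h ⊢
  exact sum_mem h

lemma mul_mem_xPow {c d : ℤ} {f g : RatFunc K} (hf : f ∈ xPow K c) (hg : g ∈ xPow K d) :
    f * g ∈ xPow K (c + d) := by
  obtain ⟨p, rfl⟩ := hf
  obtain ⟨q, rfl⟩ := hg
  exact ⟨p * q, by rw [map_mul, zpow_add₀ RatFunc.X_ne_zero]; ring⟩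

lemma zpow_mem_xPow (c : ℤ) : (RatFunc.X : RatFunc K) ^ c ∈ xPow K c := ⟨1, by simp⟩

lemma mem_xPow_zero_iff {f : RatFunc K} :
    f ∈ xPow K 0 ↔ ∃ p : K[X], f = algebraMap K[X] (RatFunc K) p := by
  simp only [xPow, zpow_zero, one_mul, Set.mem_ofPred_eq]

lemma zpow_mul_mem_xPow_iff {c d : ℤ} {f : RatFunc K} :
    RatFunc.X ^ d * f ∈ xPow K c ↔ f ∈ xPow K (c - d) := by
  refine ⟨fun h => ?_, fun h => ?_⟩
  · have hf := mul_mem_xPow (zpow_mem_xPow (-d)) h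
    rwa [← mul_assoc, ← zpow_add₀ RatFunc.X_ne_zero, neg_add_cancel, zpow_zero, one_mul,
      neg_add_eq_sub] at hf
  · simpa only [add_sub_cancel] using mul_mem_xPow (zpow_mem_xPow d) h

lemma algebraMap_mem_xPow_natCast_iff {p : K[X]} {N : ℕ} :
    algebraMap K[X] (RatFunc K) p ∈ xPow K N ↔ X ^ N ∣ p := by
  refine exists_congr fun q => ?_
  rw [← (RatFunc.algebraMap_injective K).eq_iff, map_mul, map_pow, RatFunc.algebraMap_X,
    zpow_natCast]

lemma one_mem_xPow_iff {c : ℤ} : (1 : RatFunc K) ∈ xPow K c ↔ c ≤ 0 := by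
  refine ⟨fun h => ?_, fun h => ?_⟩
  · by_contra! hc
    lift c to ℕ using hc.le
    rw [← map_one (algebraMap K[X] (RatFunc K)), algebraMap_mem_xPow_natCast_iff,
      X_pow_dvd_iff] at h
    exact one_ne_zero ((coeff_one_zero (R := K)).symm.trans (h 0 (by exact_mod_cast hc)))
  · obtain ⟨N, rfl⟩ := Int.exists_eq_neg_ofNat h
    exact ⟨X ^ N, by simp [RatFunc.X_ne_zero]⟩

lemma zpow_mem_xPow_iff {c d : ℤ} : (RatFunc.X : RatFunc K) ^ d ∈ xPow K c ↔ c ≤ d := by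
  rw [← mul_one (RatFunc.X ^ d), zpow_mul_mem_xPow_iff, one_mem_xPow_iff, sub_nonpos]

lemma xPow_anti {c d : ℤ} (h : c ≤ d) : xPow K d ⊆ xPow K c := fun f hf => by
  simpa only [one_mul, sub_add_cancel] using
    mul_mem_xPow (one_mem_xPow_iff.2 (sub_nonpos.2 h)) hf

lemma bddAbove_setOf_mem_xPow {f : RatFunc K} (hf : f ≠ 0) : BddAbove {e | f ∈ xPow K e} := by
  refine ⟨f.num.natDegree, fun e he => ?_⟩
  rcases le_total e 0 with h0 | h0
  · exact h0.trans (Int.natCast_nonneg _)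
  lift e to ℕ using h0
  have hnum : algebraMap K[X] (RatFunc K) f.num ∈ xPow K e := by
    rw [(div_eq_iff (RatFunc.algebraMap_ne_zero f.denom_ne_zero)).1 f.num_div_denom]
    simpa only [add_zero] using mul_mem_xPow he (mem_xPow_zero_iff.2 ⟨f.denom, rfl⟩)
  have hle := natDegree_le_of_dvd (algebraMap_mem_xPow_natCast_iff.1 hnum) (RatFunc.num_ne_zero hf)
  rw [natDegree_X_pow] at hle
  exact_mod_cast hle

end xPow

section General

/-- A finite transitive relation without loops has a terminal element; here the relation is
`v i k + τ k ≤ τ i`. -/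
lemma exists_forall_lt_add {ι G : Type*} [Finite ι] [Nonempty ι] [AddCommGroup G] [LinearOrder G]
    [IsOrderedAddMonoid G] {v : ι → ι → G} (hpos : ∀ i, 0 < v i i)
    (htri : ∀ i j k, v i k ≤ v i j + v j k) (τ : ι → G) : ∃ i, ∀ k, τ i < v i k + τ k := by
  let r (k i : ι) : Prop := v i k + τ k ≤ τ i
  have hirrefl : Std.Irrefl r := ⟨fun i h => (lt_add_of_pos_left (τ i) (hpos i)).not_ge h⟩
  have htrans : IsTrans ι r := ⟨fun k j i hkj hji => calc
    v i k + τ k ≤ v i j + (v j k + τ k) := by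
      rw [← add_assoc]; exact add_le_add_left (htri i j k) (τ k)
    _ ≤ v i j + τ j := add_le_add_right hkj _
    _ ≤ τ i := hji⟩
  obtain ⟨i, -, hi⟩ := (Finite.wellFounded_of_trans_of_irrefl r).has_min Set.univ Set.univ_nonempty
  exact ⟨i, fun k => lt_of_not_ge (hi k trivial)⟩

variable {R M P : Type*} [Ring R] [AddCommGroup M] [Module R M] [AddCommGroup P] [Module R P]

lemma isCompl_range_ker_of_comp_eq_id {f : M →ₗ[R] P} {g : P →ₗ[R] M} (h : f ∘ₗ g = .id) :
    IsCompl g.range f.ker := by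
  have hg : f.ker = (g ∘ₗ f).ker :=
    (LinearMap.ker_comp_of_ker_eq_bot f (LinearMap.ker_eq_bot_of_inverse h)).symm
  have hf : g.range = (g ∘ₗ f).range :=
    (LinearMap.range_comp_of_range_eq_top g
      (LinearMap.range_eq_top.2 (LinearMap.surjective_of_comp_eq_id _ _ h))).symm
  rw [hg, hf]
  refine LinearMap.IsIdempotentElem.isCompl ?_
  rw [IsIdempotentElem, Module.End.mul_eq_comp, LinearMap.comp_assoc, ← f.comp_assoc, h,
    LinearMap.id_comp]

lemma nonempty_linearEquiv_of_surjective_of_indecomposable [Module.Projective R P] [Nontrivial P]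
    (hM : ¬ ∃ A B : Submodule R M, IsCompl A B ∧ A ≠ ⊥ ∧ B ≠ ⊥) {f : M →ₗ[R] P}
    (hf : Function.Surjective f) : Nonempty (M ≃ₗ[R] P) := by
  obtain ⟨g, hg⟩ := f.exists_rightInverse_of_surjective (LinearMap.range_eq_top.2 hf)
  refine ⟨.ofBijective f ⟨LinearMap.ker_eq_bot.1 ?_, hf⟩⟩
  by_contra hker
  refine hM ⟨_, _, isCompl_range_ker_of_comp_eq_id hg, fun hrange => ?_, hker⟩
  obtain ⟨v, hv⟩ := exists_ne (0 : P)
  rw [LinearMap.range_eq_bot] at hrange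
  rw [hrange, LinearMap.comp_zero] at hg
  exact hv (LinearMap.congr_fun hg v).symm

end General

section TiledOrder

variable {K : Type*} [Field K] {n : ℕ}
  {Λ : Subalgebra K[X] (Matrix (Fin n) (Fin n) (RatFunc K))} {c : Fin n → Fin n → ℤ}

instance matVec_smulCommClass :
    SMulCommClass (RatFunc K) (Matrix (Fin n) (Fin n) (RatFunc K)) (Fin n → RatFunc K) where
  smul_comm f A v := (mulVec_smul A f v).symm

instance matVec_isScalarTower :
    IsScalarTower K[X] (Matrix (Fin n) (Fin n) (RatFunc K)) (Fin n → RatFunc K) where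
  smul_assoc p A v := smul_mulVec p A v

lemma coe_smul_eq_mulVec (a : Λ) (v : Fin n → RatFunc K) : a • v = a.1 *ᵥ v := rfl

lemma vecMulVec_single_mulVec (i : Fin n) (v w : Fin n → RatFunc K) :
    vecMulVec v (Pi.single i 1) *ᵥ w = w i • v := by
  rw [vecMulVec_mulVec, single_one_dotProduct, op_smul_eq_smul]

lemma exists_coordinate_generator (N : Submodule Λ (Fin n → RatFunc K)) (i : Fin n) :
    ∃ g : K[X], (∃ v ∈ N, v i = algebraMap K[X] (RatFunc K) g) ∧
      ∀ v ∈ N, ∀ p : K[X], v i = algebraMap K[X] (RatFunc K) p → g ∣ p := by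
  let I : Ideal K[X] := ((N.restrictScalars K[X]).map (LinearMap.proj i)).comap
    (Algebra.linearMap K[X] (RatFunc K))
  refine ⟨Submodule.IsPrincipal.generator I, Submodule.IsPrincipal.generator_mem I,
    fun v hv p hp => (Submodule.IsPrincipal.mem_iff_generator_dvd I).1 ⟨v, hv, hp⟩⟩

/-- `Λ` is the tiled order in `M_n(K(x))` with exponent matrix `c`. -/
def IsTiledOrder (Λ : Subalgebra K[X] (Matrix (Fin n) (Fin n) (RatFunc K)))
    (c : Fin n → Fin n → ℤ) : Prop :=
  ∀ A, A ∈ Λ ↔ ∀ i j, A i j ∈ xPow K (c i j)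

/-- `P` is the lattice `⨁ₖ x^{dₖ}·K[x]` in the column space `K(x)^n`. -/
def IsTiledLattice (P : Submodule Λ (Fin n → RatFunc K)) (d : Fin n → ℤ) : Prop :=
  ∀ v, v ∈ P ↔ ∀ k, v k ∈ xPow K (d k)

/-- The `i`-th column of `Λ`, realized as the cyclic `Λ`-submodule of the column space generated by
the `i`-th standard basis vector. -/
def columnLattice (Λ : Subalgebra K[X] (Matrix (Fin n) (Fin n) (RatFunc K))) (i : Fin n) :
    Submodule Λ (Fin n → RatFunc K) :=
  Submodule.span Λ {Pi.single i 1}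

/-- The exponents of the radical of the tiled order with exponent matrix `c` at the place `x`. -/
def radicalExp (c : Fin n → Fin n → ℤ) (i j : Fin n) : ℤ := max (c i j) (1 - c j i)

namespace IsTiledOrder

lemma single_mem (hΛ : IsTiledOrder Λ c) {i j : Fin n} {f : RatFunc K}
    (hf : f ∈ xPow K (c i j)) : Matrix.single i j f ∈ Λ := by
  rw [hΛ]
  intro k l
  rw [Matrix.single_apply]
  split_ifs with h
  · rwa [← h.1, ← h.2]
  · exact zero_mem_xPow _

lemma triangle (hΛ : IsTiledOrder Λ c) (i j k : Fin n) : c i k ≤ c i j + c j k := by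
  have hmem := mul_mem (hΛ.single_mem (zpow_mem_xPow (c i j)))
    (hΛ.single_mem (zpow_mem_xPow (c j k)))
  rw [Matrix.single_mul_single_same, ← zpow_add₀ RatFunc.X_ne_zero, hΛ] at hmem
  simpa only [Matrix.single_apply_same, zpow_mem_xPow_iff] using hmem i k

lemma exponent_self (hΛ : IsTiledOrder Λ c) (i : Fin n) : c i i = 0 := by
  have hone := (hΛ 1).1 (one_mem Λ) i i
  rw [one_apply_eq, one_mem_xPow_iff] at hone
  linarith [hΛ.triangle i i i]

lemma radicalExp_self_pos (hΛ : IsTiledOrder Λ c) (i : Fin n) : 0 < radicalExp c i i := by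
  simp [radicalExp, hΛ.exponent_self]

lemma radicalExp_triangle (hΛ : IsTiledOrder Λ c) (i j k : Fin n) :
    radicalExp c i k ≤ radicalExp c i j + radicalExp c j k := by
  have h₁ := hΛ.triangle i j k
  have h₂ := hΛ.triangle j k i
  unfold radicalExp
  omega

/-- The multiple `f • e_{ij}` of a matrix unit as an element of `Λ`. -/
def matrixUnit (hΛ : IsTiledOrder Λ c) (i j : Fin n) {f : RatFunc K} (hf : f ∈ xPow K (c i j)) :
    Λ :=
  ⟨Matrix.single i j f, hΛ.single_mem hf⟩

lemma matrixUnit_smul (hΛ : IsTiledOrder Λ c) (i j : Fin n) {f : RatFunc K}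
    (hf : f ∈ xPow K (c i j)) (v : Fin n → RatFunc K) :
    hΛ.matrixUnit i j hf • v = Pi.single i (f * v j) :=
  Matrix.single_mulVec i j f v

lemma vecMulVec_single_mem (hΛ : IsTiledOrder Λ c) {i : Fin n} {v : Fin n → RatFunc K}
    (hv : ∀ k, v k ∈ xPow K (c k i)) : vecMulVec v (Pi.single i 1) ∈ Λ := by
  rw [hΛ]
  intro k l
  rw [vecMulVec_apply]
  rcases eq_or_ne l i with rfl | hl
  · simpa only [Pi.single_eq_same, mul_one] using hv k
  · simpa only [Pi.single_eq_of_ne hl, mul_zero] using zero_mem_xPow _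

lemma isTiledLattice_columnLattice (hΛ : IsTiledOrder Λ c) (i : Fin n) :
    IsTiledLattice (columnLattice Λ i) (c · i) := by
  intro v
  rw [columnLattice, Submodule.mem_span_singleton]
  constructor
  · rintro ⟨a, rfl⟩ k
    rw [coe_smul_eq_mulVec, mulVec_single_one]
    exact (hΛ a).1 a.2 k i
  · intro hv
    refine ⟨⟨_, hΛ.vecMulVec_single_mem hv⟩, ?_⟩
    rw [coe_smul_eq_mulVec, vecMulVec_single_mulVec, Pi.single_eq_same, one_smul]

lemma projective_columnLattice (hΛ : IsTiledOrder Λ c) (i : Fin n) :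
    Module.Projective Λ (columnLattice Λ i) := by
  let e : columnLattice Λ i := ⟨Pi.single i 1, Submodule.mem_span_singleton_self _⟩
  let toMatrix : columnLattice Λ i →ₗ[Λ] Λ :=
    { toFun v := ⟨_, hΛ.vecMulVec_single_mem ((hΛ.isTiledLattice_columnLattice i v).1 v.2)⟩
      map_add' v w := Subtype.ext (add_vecMulVec v.1 w.1 _)
      map_smul' a v := Subtype.ext (mul_vecMulVec a.1 v.1 _).symm }
  refine .of_split toMatrix (LinearMap.toSpanSingleton Λ _ e) (LinearMap.ext fun v => ?_)
  ext1
  change vecMulVec v.1 (Pi.single i 1) *ᵥ Pi.single i 1 = v.1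
  rw [vecMulVec_single_mulVec, Pi.single_eq_same, one_smul]

end IsTiledOrder

namespace IsTiledLattice

variable {P Q : Submodule Λ (Fin n → RatFunc K)} {d d' : Fin n → ℤ}

lemma single_mem_iff (hP : IsTiledLattice P d) {k : Fin n} {f : RatFunc K} :
    Pi.single k f ∈ P ↔ f ∈ xPow K (d k) := by
  rw [hP]
  refine ⟨fun h => by simpa only [Pi.single_eq_same] using h k, fun hf l => ?_⟩
  rcases eq_or_ne l k with rfl | hl
  · rwa [Pi.single_eq_same]
  · rw [Pi.single_eq_of_ne hl]
    exact zero_mem_xPow _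

protected lemma nontrivial [NeZero n] (hP : IsTiledLattice P d) : Nontrivial P := by
  refine P.nontrivial_iff_ne_bot.2 <| P.ne_bot_iff.2
    ⟨_, hP.single_mem_iff.2 (zpow_mem_xPow (d 0)), ?_⟩
  rw [Ne, Pi.single_eq_zero_iff]
  exact zpow_ne_zero _ RatFunc.X_ne_zero

lemma nonempty_linearEquiv_of_shift (hP : IsTiledLattice P d) (hQ : IsTiledLattice Q d') {e : ℤ}
    (h : ∀ k, d' k = d k + e) : Nonempty (P ≃ₗ[Λ] Q) := by
  let u : (RatFunc K)ˣ := .mk0 (RatFunc.X ^ e) (zpow_ne_zero e RatFunc.X_ne_zero)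
  refine ⟨.ofSubmodules (DistribMulAction.toLinearEquiv Λ _ u) P Q ?_⟩
  ext v
  rw [Submodule.mem_map_equiv, hP, hQ]
  refine forall_congr' fun k => ?_
  change (RatFunc.X ^ e)⁻¹ * v k ∈ _ ↔ _
  rw [← _root_.zpow_neg, zpow_mul_mem_xPow_iff, sub_neg_eq_add, ← h k]

/-- Homomorphisms between lattices are homotheties, because `K(x)^n` is a simple module over
`M_n(K(x))` with endomorphism ring `K(x)`. -/
lemma exists_eq_smul [NeZero n] (hΛ : IsTiledOrder Λ c) (hP : IsTiledLattice P d)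
    (ψ : P →ₗ[Λ] Fin n → RatFunc K) : ∃ f : RatFunc K, ∀ v, ψ v = f • v.1 := by
  let w : P := ⟨_, hP.single_mem_iff.2 (zpow_mem_xPow (d 0))⟩
  refine ⟨RatFunc.X ^ (-d 0) * ψ w 0, fun v => funext fun k => ?_⟩
  let a : Λ := hΛ.matrixUnit 0 k (zpow_mem_xPow (c 0 k))
  have ha : ∀ u : Fin n → RatFunc K, a • u = Pi.single 0 (RatFunc.X ^ c 0 k * u k) :=
    hΛ.matrixUnit_smul 0 k _
  obtain ⟨p, hp⟩ := hP.single_mem_iff.1 (ha v.1 ▸ P.smul_mem a v.2)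
  have hav : a • v = p • w := by
    ext1
    change a • v.1 = p • Pi.single 0 _
    rw [ha, hp, ← Pi.single_smul, Algebra.smul_def, mul_comm]
  have hψ : RatFunc.X ^ c 0 k * ψ v k = algebraMap K[X] (RatFunc K) p * ψ w 0 := calc
    RatFunc.X ^ c 0 k * ψ v k = ψ (a • v) 0 := by rw [map_smul, ha, Pi.single_eq_same]
    _ = algebraMap K[X] (RatFunc K) p * ψ w 0 := by
      rw [hav, LinearMap.map_smul_of_tower, Pi.smul_apply, Algebra.smul_def]
  have hX (e : ℤ) : (RatFunc.X : RatFunc K) ^ e ≠ 0 := zpow_ne_zero e RatFunc.X_ne_zero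
  refine mul_left_cancel₀ (hX (c 0 k)) ?_
  rw [hψ, Pi.smul_apply, smul_eq_mul, mul_left_comm, hp, _root_.zpow_neg]
  field_simp [hX (d 0)]

lemma exists_shift_of_surjective [NeZero n] (hΛ : IsTiledOrder Λ c) (hP : IsTiledLattice P d)
    (hQ : IsTiledLattice Q d') {ψ : P →ₗ[Λ] Q} (hψ : Function.Surjective ψ) :
    ∃ e, ∀ k, d' k = d k + e := by
  obtain ⟨f, hf⟩ := hP.exists_eq_smul hΛ (Q.subtype ∘ₗ ψ)
  have hψ_apply (v : P) (k : Fin n) : (ψ v).1 k = f * v.1 k := congrFun (hf v) k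
  have hle (k l : Fin n) : d' k + d l ≤ d k + d' l := by
    let w : P := ⟨_, hP.single_mem_iff.2 (zpow_mem_xPow (d k))⟩
    have hwk : w.1 k = RatFunc.X ^ d k := Pi.single_eq_same _ _
    obtain ⟨v, hv⟩ := hψ ⟨_, hQ.single_mem_iff.2 (zpow_mem_xPow (d' l))⟩
    have hvl : (ψ v).1 l = RatFunc.X ^ d' l := by rw [hv]; exact Pi.single_eq_same _ _
    have hmul := mul_mem_xPow ((hQ _).1 (ψ w).2 k) ((hP _).1 v.2 l)
    rwa [hψ_apply, mul_right_comm, ← hψ_apply, hvl, hwk, ← zpow_add₀ RatFunc.X_ne_zero,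
      zpow_mem_xPow_iff, add_comm (d' l)] at hmul
  exact ⟨d' 0 - d 0, fun k => by linarith [hle k 0, hle 0 k]⟩

end IsTiledLattice

namespace IsTiledOrder

lemma exists_map_columnLattice_eq (hΛ : IsTiledOrder Λ c) {i : Fin n}
    {N : Submodule Λ (Fin n → RatFunc K)} (hN : N ≤ columnLattice Λ i) {w : Fin n → RatFunc K}
    (hwN : w ∈ N) (hw : w i ∉ xPow K 1) :
    ∃ u : (RatFunc K)ˣ, (columnLattice Λ i).map
      (DistribMulAction.toLinearEquiv Λ (Fin n → RatFunc K) u).toLinearMap = N := by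
  have hcol := hΛ.isTiledLattice_columnLattice i
  obtain ⟨g, ⟨v₀, hv₀N, hv₀⟩, hg⟩ := exists_coordinate_generator N i
  have hgX : ¬ X ∣ g := fun hdvd => by
    have hw0 : w i ∈ xPow K 0 := by
      simpa only [hΛ.exponent_self] using (hcol w).1 (hN hwN) i
    obtain ⟨p, hp⟩ := mem_xPow_zero_iff.1 hw0
    rw [hp, ← Nat.cast_one, algebraMap_mem_xPow_natCast_iff, pow_one] at hw
    exact hw (hdvd.trans (hg w hwN p hp))
  have hg0 : algebraMap K[X] (RatFunc K) g ≠ 0 :=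
    RatFunc.algebraMap_ne_zero fun h => hgX (h ▸ dvd_zero _)
  refine ⟨.mk0 _ hg0, le_antisymm ?_ fun v hv => ?_⟩
  · rintro _ ⟨v, hv, rfl⟩
    have hsmul := N.smul_mem (⟨_, hΛ.vecMulVec_single_mem ((hcol v).1 hv)⟩ : Λ) hv₀N
    rwa [coe_smul_eq_mulVec, vecMulVec_single_mulVec, hv₀] at hsmul
  · rw [Submodule.mem_map_equiv, hcol]
    intro k
    obtain ⟨p, hp⟩ := (hcol v).1 (hN hv) k
    obtain ⟨m, hm⟩ := Int.eq_ofNat_of_zero_le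
      ((hΛ.exponent_self i).symm.trans_le (hΛ.triangle i k i))
    have hdvd : g ∣ X ^ m * p := by
      refine hg _ (N.smul_mem (hΛ.matrixUnit i k (zpow_mem_xPow (c i k))) hv) _ ?_
      rw [matrixUnit_smul, Pi.single_eq_same, hp, ← mul_assoc, ← zpow_add₀ RatFunc.X_ne_zero, hm,
        zpow_natCast, map_mul, map_pow, RatFunc.algebraMap_X]
    have hcop : IsCoprime g (X ^ m) := (irreducible_X.coprime_iff_not_dvd.2 hgX).symm.pow_right
    obtain ⟨q, rfl⟩ := hcop.dvd_of_dvd_mul_left hdvd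
    refine ⟨q, ?_⟩
    change (algebraMap K[X] (RatFunc K) g)⁻¹ * v k = _
    rw [hp, map_mul, inv_mul_eq_iff_eq_mul₀ hg0, mul_left_comm]

lemma exists_coordinate_exponents (hΛ : IsTiledOrder Λ c) {N : Submodule Λ (Fin n → RatFunc K)}
    (hN : N ≠ ⊥) {d : Fin n → ℤ} (hd : ∀ v ∈ N, ∀ i, v i ∈ xPow K (d i)) :
    ∃ τ : Fin n → ℤ, ∀ i e, (∀ v ∈ N, v i ∈ xPow K e) ↔ e ≤ τ i := by
  obtain ⟨v, hvN, hv⟩ := N.ne_bot_iff.1 hN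
  obtain ⟨k, hk⟩ := Function.ne_iff.1 hv
  have hgreatest (i : Fin n) : ∃ τ : ℤ, (∀ v ∈ N, v i ∈ xPow K τ) ∧
      ∀ e, (∀ v ∈ N, v i ∈ xPow K e) → e ≤ τ := by
    refine Int.exists_greatest_of_bdd ?_ ⟨d i, fun v hv => hd v hv i⟩
    obtain ⟨B, hB⟩ := bddAbove_setOf_mem_xPow
      (mul_ne_zero (zpow_ne_zero (c i k) RatFunc.X_ne_zero) hk)
    refine ⟨B, fun e he => hB ?_⟩
    have hi := he _ (N.smul_mem (hΛ.matrixUnit i k (zpow_mem_xPow (c i k))) hvN)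
    rwa [matrixUnit_smul, Pi.single_eq_same] at hi
  choose τ hτ hmax using hgreatest
  exact ⟨τ, fun i e => ⟨hmax i e, fun he v hv => xPow_anti he (hτ i v hv)⟩⟩

end IsTiledOrder

section Projective

variable {M : Type*} [AddCommGroup M] [Module Λ M] [Module.Projective Λ M]

lemma exists_hom_columnLattice_ne_zero [Nontrivial M] :
    ∃ i, ∃ ψ : M →ₗ[Λ] columnLattice Λ i, ψ ≠ 0 := by
  obtain ⟨s, hs⟩ := Module.projective_def'.1 ‹Module.Projective Λ M›
  obtain ⟨m, hm⟩ := exists_ne (0 : M)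
  have hsm : s m ≠ 0 := fun h => hm <| by
    rw [← LinearMap.id_apply (R := Λ) m, ← hs, LinearMap.comp_apply, h, map_zero]
  obtain ⟨b, hb⟩ := Finsupp.ne_iff.1 hsm
  obtain ⟨k, i, hki⟩ : ∃ k i, (s m b).1 k i ≠ 0 := by
    by_contra! h
    exact hb (Subtype.ext (Matrix.ext h))
  let e : columnLattice Λ i := ⟨Pi.single i 1, Submodule.mem_span_singleton_self _⟩
  refine ⟨i, LinearMap.toSpanSingleton Λ _ e ∘ₗ Finsupp.lapply b ∘ₗ s, fun h => hki ?_⟩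
  have hcol : (s m b).1 *ᵥ Pi.single i 1 = 0 := congrArg Subtype.val (LinearMap.congr_fun h m)
  rw [mulVec_single_one] at hcol
  exact congrFun hcol k

lemma apply_mem_xPow_of_forall_le {r : Fin n → Fin n → ℤ}
    (hr : ∀ (χ : M →ₗ[Λ] Λ) m i k, (χ m).1 i k ∈ xPow K (r i k))
    (ψ : M →ₗ[Λ] Fin n → RatFunc K) {τ : Fin n → ℤ} (hτ : ∀ m k, ψ m k ∈ xPow K (τ k))
    {i : Fin n} {e : ℤ} (he : ∀ k, e ≤ r i k + τ k) (m : M) : ψ m i ∈ xPow K e := by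
  obtain ⟨s, hs⟩ := Module.projective_def'.1 ‹Module.Projective Λ M›
  have hexpand : ∑ b ∈ (s m).support, s m b • b = m := LinearMap.congr_fun hs m
  rw [← hexpand, map_sum, Finset.sum_apply]
  refine sum_mem_xPow fun b _ => ?_
  rw [map_smul, coe_smul_eq_mulVec]
  change ∑ k, (s m b).1 i k * ψ b k ∈ _
  exact sum_mem_xPow fun k _ =>
    xPow_anti (he k) (mul_mem_xPow (hr (Finsupp.lapply b ∘ₗ s) m i k) (hτ b k))

end Projective

namespace IsTiledOrder

variable {M : Type*} [AddCommGroup M] [Module Λ M]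

lemma apply_mem_xPow_radicalExp (hΛ : IsTiledOrder Λ c)
    (hM : ∀ i (ψ : M →ₗ[Λ] columnLattice Λ i) m, (ψ m).1 i ∈ xPow K 1)
    (χ : M →ₗ[Λ] Λ) (m : M) (i k : Fin n) : (χ m).1 i k ∈ xPow K (radicalExp c i k) := by
  rcases max_choice (c i k) (1 - c k i) with h | h <;> rw [radicalExp, h]
  · exact (hΛ _).1 (χ m).2 i k
  · let e : columnLattice Λ i :=
      ⟨_, (hΛ.isTiledLattice_columnLattice i).single_mem_iff.2 (zpow_mem_xPow (c k i))⟩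
    have hmem := hM i (LinearMap.toSpanSingleton Λ _ e ∘ₗ χ) m
    change ((χ m).1 *ᵥ Pi.single k (RatFunc.X ^ c k i)) i ∈ _ at hmem
    rwa [mulVec_single, Pi.smul_apply, op_smul_eq_smul, smul_eq_mul, zpow_mul_mem_xPow_iff] at hmem

/-- Otherwise every functional `M → Λ` has values in the radical of `Λ` at `x`; by the dual basis
property, some coordinate of a nonzero image `ψ M` would then be divisible by a higher power of `x`
than it is. -/
lemma exists_hom_columnLattice_apply_notMem (hΛ : IsTiledOrder Λ c) [Module.Projective Λ M]
    [Nontrivial M] : ∃ i, ∃ ψ : M →ₗ[Λ] columnLattice Λ i, ∃ m, (ψ m).1 i ∉ xPow K 1 := by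
  by_contra! hM
  obtain ⟨j, ψ, hψ⟩ := exists_hom_columnLattice_ne_zero (Λ := Λ) (M := M)
  have : Nonempty (Fin n) := ⟨j⟩
  let ψ' : M →ₗ[Λ] Fin n → RatFunc K := (columnLattice Λ j).subtype ∘ₗ ψ
  have hψ' : ψ'.range ≠ ⊥ := fun h => hψ <| LinearMap.ext fun m =>
    Subtype.ext (LinearMap.congr_fun (LinearMap.range_eq_bot.1 h) m)
  obtain ⟨τ, hτ⟩ := hΛ.exists_coordinate_exponents hψ' (d := (c · j)) <| by
    rintro _ ⟨m, rfl⟩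
    exact (hΛ.isTiledLattice_columnLattice j _).1 (ψ m).2
  obtain ⟨i, hi⟩ := exists_forall_lt_add hΛ.radicalExp_self_pos hΛ.radicalExp_triangle τ
  have hsucc (m : M) : ψ' m i ∈ xPow K (τ i + 1) :=
    apply_mem_xPow_of_forall_le (hΛ.apply_mem_xPow_radicalExp hM) ψ'
      (fun m k => (hτ k (τ k)).2 le_rfl _ ⟨m, rfl⟩) hi m
  have hle : τ i + 1 ≤ τ i := (hτ i _).1 (by rintro _ ⟨m, rfl⟩; exact hsucc m)
  omega

lemma exists_surjective_columnLattice (hΛ : IsTiledOrder Λ c) [Module.Projective Λ M]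
    [Nontrivial M] : ∃ i, ∃ ψ : M →ₗ[Λ] columnLattice Λ i, Function.Surjective ψ := by
  obtain ⟨i, ψ, m, hm⟩ := hΛ.exists_hom_columnLattice_apply_notMem (M := M)
  obtain ⟨u, hu⟩ := hΛ.exists_map_columnLattice_eq
    (N := ((columnLattice Λ i).subtype ∘ₗ ψ).range)
    (by rintro _ ⟨m, rfl⟩; exact (ψ m).2) ⟨m, rfl⟩ hm
  let e := LinearEquiv.ofSubmodules _ _ _ hu
  exact ⟨i, e.symm.toLinearMap ∘ₗ ((columnLattice Λ i).subtype ∘ₗ ψ).rangeRestrict,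
    e.symm.surjective.comp (LinearMap.surjective_rangeRestrict _)⟩

theorem projective_iff_exists_shift [NeZero n] (hΛ : IsTiledOrder Λ c)
    {P : Submodule Λ (Fin n → RatFunc K)} {d : Fin n → ℤ} (hP : IsTiledLattice P d) :
    Module.Projective Λ P ↔ ∃ i e, ∀ k, d k = c k i + e := by
  constructor
  · intro _
    have := hP.nontrivial
    obtain ⟨i, ψ, hψ⟩ := hΛ.exists_surjective_columnLattice (M := P)
    obtain ⟨e, he⟩ :=
      hP.exists_shift_of_surjective hΛ (hΛ.isTiledLattice_columnLattice i) hψ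
    exact ⟨i, -e, fun k => by rw [he k, add_neg_cancel_right]⟩
  · rintro ⟨i, e, h⟩
    have := hΛ.projective_columnLattice i
    obtain ⟨f⟩ := (hΛ.isTiledLattice_columnLattice i).nonempty_linearEquiv_of_shift hP h
    exact .of_equiv f

theorem exists_linearEquiv_columnLattice (hΛ : IsTiledOrder Λ c) [Module.Projective Λ M]
    [Nontrivial M] (hM : ¬ ∃ A B : Submodule Λ M, IsCompl A B ∧ A ≠ ⊥ ∧ B ≠ ⊥) :
    ∃ i, Nonempty (M ≃ₗ[Λ] columnLattice Λ i) := by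
  obtain ⟨i, ψ, hψ⟩ := hΛ.exists_surjective_columnLattice (M := M)
  have : NeZero n := ⟨i.pos.ne'⟩
  have := hΛ.projective_columnLattice i
  have := (hΛ.isTiledLattice_columnLattice i).nontrivial
  exact ⟨i, nonempty_linearEquiv_of_surjective_of_indecomposable (R := Λ)
    (P := columnLattice Λ i) hM hψ⟩

end IsTiledOrder

end TiledOrder

section Polygon

variable {n : ℕ}

lemma eq_succ_or_eq_of_dExp_eq_cExp_add (hn : 2 ≤ n) {s t : ℕ} (hs : 1 ≤ s) (hst : s < t)
    (ht : t ≤ n) {i : Fin n} {e : ℤ} (h : ∀ k : Fin n, dExp s t k = cExp n k i + e) :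
    t = s + 1 ∨ (s = 1 ∧ t = n) := by
  have hval (k : ℕ) (hk : k < n) := h ⟨k, hk⟩
  simp only [dExp, cExp] at hval
  have h_zero := hval 0 (by omega)
  have h_self := hval i i.2
  rcases eq_or_ne (i + 1 : ℕ) n with hi | hi
  · have he : e = 1 := by grind
    have htn : t = n := by grind
    have hs1 : s = 1 := by grind [hval 1 (by omega)]
    exact .inr ⟨hs1, htn⟩
  · have he : e = 0 := by grind
    have hsi : s = i + 1 := by grind [hval (i + 1) (by omega)]
    refine .inl (not_not.1 fun ht' => ?_)
    have h_succ_succ := hval (i + 2) (by omega)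
    grind


lemma exists_dExp_eq_cExp_add {s t : ℕ} (hs : 1 ≤ s) (hst : s < t) (ht : t ≤ n)
    (h : t = s + 1 ∨ (s = 1 ∧ t = n)) :
    ∃ i e, ∀ k : Fin n, dExp s t k = cExp n k i + e := by
  rcases h with rfl | ⟨rfl, rfl⟩
  · refine ⟨⟨s - 1, by omega⟩, 0, fun k => ?_⟩
    simp only [dExp, cExp]
    grind
  · refine ⟨⟨t - 1, by omega⟩, 1, fun k => ?_⟩
    simp only [dExp, cExp]
    grind

lemma exists_side_dExp_eq_cExp_add (hn : 2 ≤ n) (i : Fin n) :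
    ∃ s t, 1 ≤ s ∧ s < t ∧ t ≤ n ∧ (t = s + 1 ∨ (s = 1 ∧ t = n)) ∧
      ∃ e, ∀ k : Fin n, dExp s t k = cExp n k i + e := by
  rcases eq_or_ne (i + 1 : ℕ) n with h | h
  · refine ⟨1, n, le_rfl, by omega, le_rfl, .inr ⟨rfl, rfl⟩, 1, fun k => ?_⟩
    simp only [dExp, cExp]
    grind
  · refine ⟨i + 1, i + 2, by omega, by omega, by omega, .inl rfl, 0, fun k => ?_⟩
    simp only [dExp, cExp]
    grind

end Polygon

theorem statement6_general (K : Type*) [Field K] (n : ℕ) (hn : 2 ≤ n)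
    (Λ : Subalgebra K[X] (Matrix (Fin n) (Fin n) (RatFunc K)))
    (hΛ : (Λ : Set (Matrix (Fin n) (Fin n) (RatFunc K))) = lambdaCarrier K n)
    (E : ℕ → ℕ → Submodule Λ (Fin n → RatFunc K))
    (hE : ∀ i j : ℕ, 1 ≤ i → i < j → j ≤ n → (E i j : Set (Fin n → RatFunc K)) = ijSet K n i j) :
    (∀ s t : ℕ, 1 ≤ s → s < t → t ≤ n →
      (Module.Projective Λ (E s t) ↔ (t = s + 1 ∨ (s = 1 ∧ t = n)))) ∧
    (∀ (M : Type*) [AddCommGroup M] [Module Λ M],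
      (Nontrivial M ∧ ¬ ∃ A B : Submodule Λ M, IsCompl A B ∧ A ≠ ⊥ ∧ B ≠ ⊥) →
      (Module.Projective Λ M ↔
        ∃ s t : ℕ, 1 ≤ s ∧ s < t ∧ t ≤ n ∧ (t = s + 1 ∨ (s = 1 ∧ t = n)) ∧
          Nonempty (M ≃ₗ[Λ] E s t))) := by
  have : NeZero n := ⟨by omega⟩
  have hΛ' : IsTiledOrder Λ (cExp n) := Set.ext_iff.1 hΛ
  have hE' (s t : ℕ) (hs : 1 ≤ s) (hst : s < t) (ht : t ≤ n) :
      IsTiledLattice (E s t) (fun k => dExp s t k) := Set.ext_iff.1 (hE s t hs hst ht)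
  have hproj (s t : ℕ) (hs : 1 ≤ s) (hst : s < t) (ht : t ≤ n) :
      Module.Projective Λ (E s t) ↔ (t = s + 1 ∨ (s = 1 ∧ t = n)) := by
    rw [hΛ'.projective_iff_exists_shift (hE' s t hs hst ht)]
    exact ⟨fun ⟨_, _, h⟩ => eq_succ_or_eq_of_dExp_eq_cExp_add hn hs hst ht h,
      exists_dExp_eq_cExp_add hs hst ht⟩
  refine ⟨hproj, fun M _ _ ⟨_, hind⟩ => ⟨fun _ => ?_, ?_⟩⟩
  · obtain ⟨i, ⟨f⟩⟩ := hΛ'.exists_linearEquiv_columnLattice hind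
    obtain ⟨s, t, hs, hst, ht, hside, e, he⟩ := exists_side_dExp_eq_cExp_add hn i
    obtain ⟨g⟩ := (hΛ'.isTiledLattice_columnLattice i).nonempty_linearEquiv_of_shift
      (hE' s t hs hst ht) he
    exact ⟨s, t, hs, hst, ht, hside, ⟨f.trans g⟩⟩
  · rintro ⟨s, t, hs, hst, ht, hside, ⟨f⟩⟩
    have := (hproj s t hs hst ht).2 hside
    exact .of_equiv f.symm

/-- For `1 ≤ s < t ≤ n`, the `Λ`-module `(s,t)` is projective if and only if `t = s + 1` or
`(s,t) = (1,n)`. Consequently, an indecomposable Cohen–Macaulay `Λ`-module is projective if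
and only if it is isomorphic to one of the `n` modules `(1,2), (2,3), …, (n−1,n), (1,n)`
corresponding to the sides of the polygon. -/
theorem statement6 (K : Type) [Field K] (n : ℕ) (hn : 3 ≤ n)
    (Λ : Subalgebra (Polynomial K) (Matrix (Fin n) (Fin n) (RatFunc K)))
    (hΛ : (Λ : Set (Matrix (Fin n) (Fin n) (RatFunc K))) = lambdaCarrier K n)
    (E : ℕ → ℕ → Submodule ↥Λ (Fin n → RatFunc K))
    (hE : ∀ i j : ℕ, 1 ≤ i → i < j → j ≤ n →
      (E i j : Set (Fin n → RatFunc K)) = ijSet K n i j) :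
    (∀ s t : ℕ, 1 ≤ s → s < t → t ≤ n →
      (Module.Projective ↥Λ ↥(E s t) ↔ (t = s + 1 ∨ (s = 1 ∧ t = n)))) ∧
    (∀ (M : Type u) [AddCommGroup M] [Module ↥Λ M]
      [Module (Polynomial K) M] [IsScalarTower (Polynomial K) ↥Λ M],
      Module.Finite (Polynomial K) M →
      NoZeroSMulDivisors (Polynomial K) M →
      (Nontrivial M ∧ ¬ ∃ A B : Submodule ↥Λ M, IsCompl A B ∧ A ≠ ⊥ ∧ B ≠ ⊥) →
      (Module.Projective ↥Λ M ↔
        ∃ s t : ℕ, 1 ≤ s ∧ s < t ∧ t ≤ n ∧ (t = s + 1 ∨ (s = 1 ∧ t = n)) ∧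
          Nonempty (M ≃ₗ[↥Λ] ↥(E s t)))) := by
  obtain ⟨hproj, hind⟩ := statement6_general K n (by omega) Λ hΛ E hE
  exact ⟨hproj, fun M _ _ _ _ _ _ => hind M⟩
end
end
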